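/- arXiv:2409.12806 — 2 statements merged into one kernel-verified Lean document; each statement's English description precedes it below -/
import Mathlib

section
/- Let Lambda be a lattice in C and let lambda be a non-zero rational number. Then the meromorphic function omega -> wp_Lambda(lambda omega) is algebraic over the field C(wp_Lambda): there exist an integer m >= 1 and rational functions c_0, ..., c_{m-1} in C(U) such that wp_Lambda(lambda omega)^m + sum_{i<m} c_i(wp_Lambda(omega)) wp_Lambda(lambda omega)^i = 0 for all omega in C such that omega and lambda omega are not in Lambda and all terms are defined. -/
open scoped BigOperators

namespace WeierstrassElliptic

/-- The lattice `ℤω₁ + ℤω₂ ⊆ ℂ`. -/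
def latticeSet (ω₁ ω₂ : ℂ) : Set ℂ :=
  {z | ∃ m n : ℤ, z = (m : ℂ) * ω₁ + (n : ℂ) * ω₂}

/-- The point of the lattice indexed by `p ∈ ℤ × ℤ`. -/
def latPt (ω₁ ω₂ : ℂ) (p : ℤ × ℤ) : ℂ := (p.1 : ℂ) * ω₁ + (p.2 : ℂ) * ω₂

/-- The Weierstrass `℘`-function of the lattice `ℤω₁ + ℤω₂`:
`℘(z) = z⁻² + ∑_{λ ∈ Λ, λ ≠ 0} ((z+λ)⁻² - λ⁻²)`. -/
noncomputable def wp (ω₁ ω₂ : ℂ) (z : ℂ) : ℂ :=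
  (z ^ 2)⁻¹ + ∑' p : ℤ × ℤ,
    if p = 0 then 0
    else ((z + latPt ω₁ ω₂ p) ^ 2)⁻¹ - ((latPt ω₁ ω₂ p) ^ 2)⁻¹

/-- The invariant `g₂ = 60 ∑_{λ ∈ Λ, λ ≠ 0} λ⁻⁴`. -/
noncomputable def g2 (ω₁ ω₂ : ℂ) : ℂ :=
  60 * ∑' p : ℤ × ℤ, if p = 0 then 0 else ((latPt ω₁ ω₂ p) ^ 4)⁻¹

/-- The invariant `g₃ = 140 ∑_{λ ∈ Λ, λ ≠ 0} λ⁻⁶`. -/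
noncomputable def g3 (ω₁ ω₂ : ℂ) : ℂ :=
  140 * ∑' p : ℤ × ℤ, if p = 0 then 0 else ((latPt ω₁ ω₂ p) ^ 6)⁻¹

/-- The Weierstrass `ζ`-function:
`ζ(z) = z⁻¹ + ∑_{λ ∈ Λ, λ ≠ 0} ((z-λ)⁻¹ + λ⁻¹ + z λ⁻²)`. -/
noncomputable def wzeta (ω₁ ω₂ : ℂ) (z : ℂ) : ℂ :=
  z⁻¹ + ∑' p : ℤ × ℤ,
    if p = 0 then 0
    else (z - latPt ω₁ ω₂ p)⁻¹ + (latPt ω₁ ω₂ p)⁻¹ + z * ((latPt ω₁ ω₂ p) ^ 2)⁻¹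

/-- A function `c : (0,1) → ℂ` (defined on all of `ℝ`, but only its restriction to `(0,1)`
matters) is algebraic over `ℂ(t)` if there is a nonzero polynomial `P ∈ ℂ[T,Z]` with
`P(t, c(t)) = 0` for all `t ∈ (0,1)`.  Here `T = X 0` and `Z = X 1`. -/
def AlgebraicOverCt (c : ℝ → ℂ) : Prop :=
  ∃ P : MvPolynomial (Fin 2) ℂ, P ≠ 0 ∧
    ∀ t ∈ Set.Ioo (0 : ℝ) 1, MvPolynomial.eval ![(t : ℂ), c t] P = 0

/-- Membership in the set `X`: `b : (0,1) → ℂ` is such that for every `t`, either `b(t)`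
lies in the lattice `Λ(t)` (a pole of `℘`), or `t ↦ ℘(b(t),t)` is algebraic over `ℂ(t)`. -/
def MemX (ω₁ ω₂ b : ℝ → ℂ) : Prop :=
  ∀ t ∈ Set.Ioo (0 : ℝ) 1,
    b t ∈ latticeSet (ω₁ t) (ω₂ t) ∨
      AlgebraicOverCt (fun s => wp (ω₁ s) (ω₂ s) (b s))

end WeierstrassElliptic

/-!
Two elliptic functions `f`, `g` for the same lattice are algebraically dependent. Indeed, up to
translation by the lattice the monomials `f ^ i * g ^ j` with `i, j < N` have poles at a fixed
finite set of points, with orders growing linearly in `N`. Asking that a linear combination of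
them has no poles and vanishes at one point is thus `O(N)` linear conditions on `N ^ 2`
coefficients, so for large `N` there is a nontrivial solution, and by Liouville's theorem it is
identically zero. If `n * α` maps the lattice into itself, this applies to `z ↦ ℘ (n * z)` and
`z ↦ ℘ (n * α * z)`, and substituting `z = ω / n` gives an algebraic relation between `℘ ω` and
`℘ (α * ω)`.
-/

namespace WeierstrassElliptic

open Filter Topology Polynomial

section MeromorphicOrder

variable {𝕜 ι : Type*} [NontriviallyNormedField 𝕜] [Fintype ι] {s : 𝕜}

lemma exists_nat_add_nonneg (x : WithTop ℤ) : ∃ m : ℕ, 0 ≤ m + x := by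
  induction x with
  | top => exact ⟨0, by simp⟩
  | coe k => exact ⟨k.natAbs, WithTop.coe_le_coe.2 (by lia)⟩

lemma meromorphicAt_sum_mul {φ : ι → 𝕜 → 𝕜} (hφ : ∀ i, MeromorphicAt (φ i) s) (c : ι → 𝕜) :
    MeromorphicAt (fun w ↦ ∑ i, c i * φ i w) s :=
  .fun_sum fun i _ ↦ (MeromorphicAt.const (c i) s).mul (hφ i)

lemma meromorphicOrderAt_pow_sub_mul {f : 𝕜 → 𝕜} (hf : MeromorphicAt f s) (n : ℕ) :
    meromorphicOrderAt (fun w ↦ (w - s) ^ n * f w) s = n + meromorphicOrderAt f s := by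
  rw [fun_meromorphicOrderAt_mul (by fun_prop) hf, fun_meromorphicOrderAt_pow_id_sub_const]

lemma add_meromorphicOrderAt_mul_nonneg {f g : 𝕜 → 𝕜} {m n : ℕ}
    (hf : MeromorphicAt f s) (hg : MeromorphicAt g s)
    (hfm : 0 ≤ m + meromorphicOrderAt f s) (hgn : 0 ≤ n + meromorphicOrderAt g s) :
    0 ≤ (m + n : ℕ) + meromorphicOrderAt (f * g) s := by
  rw [meromorphicOrderAt_mul hf hg, Nat.cast_add, add_add_add_comm]
  exact add_nonneg hfm hgn

lemma add_meromorphicOrderAt_pow_nonneg {f : 𝕜 → 𝕜} {m : ℕ} (hf : MeromorphicAt f s)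
    (hfm : 0 ≤ m + meromorphicOrderAt f s) (i : ℕ) :
    0 ≤ (i * m : ℕ) + meromorphicOrderAt (f ^ i) s := by
  induction i with
  | zero =>
    rw [zero_mul, pow_zero, Nat.cast_zero, zero_add]
    exact AnalyticAt.meromorphicOrderAt_nonneg (f := 1) analyticAt_const
  | succ i ih =>
    rw [add_one_mul, pow_succ]
    exact add_meromorphicOrderAt_mul_nonneg (hf.pow i) hf ih hfm

lemma add_meromorphicOrderAt_pow_mul_pow_nonneg {f g : 𝕜 → 𝕜} {m : ℕ}
    (hf : MeromorphicAt f s) (hg : MeromorphicAt g s)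
    (hfm : 0 ≤ m + meromorphicOrderAt f s) (hgm : 0 ≤ m + meromorphicOrderAt g s) (i j : ℕ) :
    0 ≤ ((i + j) * m : ℕ) + meromorphicOrderAt (f ^ i * g ^ j) s := by
  rw [add_mul]
  exact add_meromorphicOrderAt_mul_nonneg (hf.pow i) (hg.pow j)
    (add_meromorphicOrderAt_pow_nonneg hf hfm i) (add_meromorphicOrderAt_pow_nonneg hg hgm j)

variable [CharZero 𝕜] [CompleteSpace 𝕜]

lemma exists_linearMap_le_analyticOrderAt {φ : ι → 𝕜 → 𝕜}
    (hφ : ∀ i, AnalyticAt 𝕜 (φ i) s) (n : ℕ) :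
    ∃ T : (ι → 𝕜) →ₗ[𝕜] (Fin n → 𝕜), ∀ c, T c = 0 →
      (n : ℕ∞) ≤ analyticOrderAt (fun w ↦ ∑ i, c i * φ i w) s := by
  let derivs : Matrix (Fin n) ι 𝕜 := .of fun k i ↦ iteratedDeriv k (φ i) s
  refine ⟨derivs.mulVecLin, fun c hc ↦ ?_⟩
  have hterm (i : ι) : AnalyticAt 𝕜 (fun w ↦ c i * φ i w) s := analyticAt_const.mul (hφ i)
  rw [natCast_le_analyticOrderAt_iff_iteratedDeriv_eq_zero
    (Finset.univ.analyticAt_fun_sum fun i _ ↦ hterm i)]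
  intro k hk
  calc iteratedDeriv k (fun w ↦ ∑ i, c i * φ i w) s
      = ∑ i, c i * iteratedDeriv k (φ i) s := by
        rw [iteratedDeriv_fun_sum fun i _ ↦ (hterm i).contDiffAt]
        simp only [iteratedDeriv_const_mul_field]
    _ = ∑ i, iteratedDeriv k (φ i) s * c i := by simp only [mul_comm]
    _ = 0 := congrFun hc ⟨k, hk⟩

lemma exists_linearMap_le_meromorphicOrderAt {φ : ι → 𝕜 → 𝕜} {m : ℕ}
    (hφ : ∀ i, MeromorphicAt (φ i) s) (hm : ∀ i, 0 ≤ m + meromorphicOrderAt (φ i) s) (n : ℕ) :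
    ∃ T : (ι → 𝕜) →ₗ[𝕜] (Fin n → 𝕜), ∀ c, T c = 0 →
      n ≤ m + meromorphicOrderAt (fun w ↦ ∑ i, c i * φ i w) s := by
  have hmer (i : ι) : MeromorphicAt (fun w ↦ (w - s) ^ m * φ i w) s :=
    MeromorphicAt.mul (by fun_prop) (hφ i)
  let ψ (i : ι) : 𝕜 → 𝕜 := toMeromorphicNFAt (fun w ↦ (w - s) ^ m * φ i w) s
  have hψ (i : ι) : AnalyticAt 𝕜 (ψ i) s := by
    rw [← (hmer i).meromorphicOrderAt_nonneg_iff_analyticAt_toMeromorphicNFAt,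
      meromorphicOrderAt_pow_sub_mul (hφ i)]
    exact hm i
  obtain ⟨T, hT⟩ := exists_linearMap_le_analyticOrderAt hψ n
  refine ⟨T, fun c hc ↦ ?_⟩
  have hψ_eq : (fun w ↦ (w - s) ^ m * ∑ i, c i * φ i w) =ᶠ[𝓝[≠] s]
      fun w ↦ ∑ i, c i * ψ i w := by
    filter_upwards [eventually_all.2 fun i ↦ (hmer i).eq_nhdsNE_toMeromorphicNFAt] with w hw
    simp only [ψ, ← hw, Finset.mul_sum, mul_left_comm]
  have hsum : AnalyticAt 𝕜 (fun w ↦ ∑ i, c i * ψ i w) s :=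
    Finset.univ.analyticAt_fun_sum fun i _ ↦ analyticAt_const.mul (hψ i)
  rw [← meromorphicOrderAt_pow_sub_mul (meromorphicAt_sum_mul hφ c),
    meromorphicOrderAt_congr hψ_eq, hsum.meromorphicOrderAt_eq]
  exact ENat.monotone_map_iff.2 Nat.mono_cast (hT c hc)

lemma meromorphicOrderAt_sum_mul_nonneg {φ : ι → 𝕜 → 𝕜} (hφ : ∀ i, MeromorphicAt (φ i) s)
    (hord : ∀ i, 0 ≤ meromorphicOrderAt (φ i) s) (c : ι → 𝕜) :
    0 ≤ meromorphicOrderAt (fun w ↦ ∑ i, c i * φ i w) s := by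
  obtain ⟨T, hT⟩ := exists_linearMap_le_meromorphicOrderAt (m := 0) hφ (by simpa using hord) 0
  simpa using hT c (Subsingleton.elim _ _)

lemma exists_ne_zero_forall_meromorphicOrderAt_pos {φ : ι → 𝕜 → 𝕜} {S : Finset 𝕜} {m : ℕ}
    (hφ : ∀ i, ∀ s ∈ S, MeromorphicAt (φ i) s)
    (hm : ∀ i, ∀ s ∈ S, 0 ≤ m + meromorphicOrderAt (φ i) s)
    (hcard : S.card * (m + 1) < Fintype.card ι) :
    ∃ c : ι → 𝕜, c ≠ 0 ∧ ∀ s ∈ S, 0 < meromorphicOrderAt (fun w ↦ ∑ i, c i * φ i w) s := by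
  choose T hT using fun s : S ↦ exists_linearMap_le_meromorphicOrderAt
    (fun i ↦ hφ i s s.2) (fun i ↦ hm i s s.2) (m + 1)
  have hker : LinearMap.ker (LinearMap.pi T) ≠ ⊥ :=
    LinearMap.ker_ne_bot_of_finrank_lt (by simpa [Module.finrank_pi_fintype] using hcard)
  obtain ⟨c, hTc, hc⟩ := (Submodule.ne_bot_iff _).1 hker
  refine ⟨c, hc, fun s hs ↦ ?_⟩
  have hle := hT ⟨s, hs⟩ c (congrFun hTc ⟨s, hs⟩)
  rw [Nat.cast_add, Nat.cast_one, WithTop.add_le_add_iff_left (by simp)] at hle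
  exact zero_lt_one.trans_le hle

end MeromorphicOrder

lemma exists_ne_zero_evalEval_eq_sum {R : Type*} [CommSemiring R] {m n : ℕ}
    {c : Fin m × Fin n → R} (hc : c ≠ 0) :
    ∃ P : R[X][X], P ≠ 0 ∧
      ∀ x y, P.evalEval x y = ∑ p, c p * (x ^ (p.1 : ℕ) * y ^ (p.2 : ℕ)) := by
  let P : R[X][X] := ∑ p, monomial (p.2 : ℕ) (monomial (p.1 : ℕ) (c p))
  have hcoeff (p : Fin m × Fin n) : (P.coeff p.2).coeff p.1 = c p := by
    simp only [P, finsetSum_coeff, coeff_monomial]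
    rw [Finset.sum_eq_single p]
    · simp
    · intro r _ hr
      split_ifs with h₂
      · rw [coeff_monomial, if_neg fun h₁ ↦ hr (Prod.ext (Fin.ext h₁) (Fin.ext h₂))]
      · simp
    · simp
  refine ⟨P, fun hP ↦ hc (funext fun p ↦ ?_), fun x y ↦ ?_⟩
  · rw [← hcoeff p, hP]
    simp
  · simp [P, evalEval, eval_finsetSum, mul_assoc]

lemma exists_monic_relation {K : Type*} [Field K] {P : K[X][X]} (hP : P ≠ 0) :
    ∃ m : ℕ, 1 ≤ m ∧ ∃ p q : Fin m → K[X], (∀ i, q i ≠ 0) ∧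
      ∀ x y, P.evalEval x y = 0 → (∀ i, (q i).eval x ≠ 0) →
        y ^ m + ∑ i, (p i).eval x / (q i).eval x * y ^ (i : ℕ) = 0 := by
  -- The factor `X` makes the degree in the second variable positive.
  let Q : K[X][X] := X * P
  have hdeg : Q.natDegree = P.natDegree + 1 := natDegree_X_mul hP
  refine ⟨Q.natDegree, by omega, fun i ↦ Q.coeff i, fun _ ↦ Q.leadingCoeff,
    fun _ ↦ leadingCoeff_ne_zero.2 (mul_ne_zero X_ne_zero hP), fun x y hxy hlead ↦ ?_⟩
  have hlead : Q.leadingCoeff.eval x ≠ 0 := hlead ⟨0, by omega⟩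
  have hQ : ∑ i : Fin Q.natDegree, (Q.coeff i).eval x * y ^ (i : ℕ) +
      Q.leadingCoeff.eval x * y ^ Q.natDegree = 0 := by
    calc _ = Q.evalEval x y := by
          rw [evalEval, eval_eq_sum_range (p := Q), Finset.sum_range_succ, Finset.sum_range]
          simp only [eval_add, eval_finsetSum, eval_mul, eval_pow, eval_C, leadingCoeff]
      _ = 0 := by rw [evalEval_mul, hxy, mul_zero]
  simp only [div_mul_eq_mul_div, ← Finset.sum_div]
  field_simp
  linear_combination hQ

/-- `f` is an elliptic function for the lattice `L`: meromorphic on `ℂ` and `L`-periodic. Meromorphy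
leaves the values of `f` at its poles arbitrary, so these are only constrained by periodicity. -/
structure IsElliptic (L : Submodule ℤ ℂ) (f : ℂ → ℂ) : Prop where
  meromorphic : Meromorphic f
  periodic : ∀ l ∈ L, Function.Periodic f l

namespace IsElliptic

variable {L : Submodule ℤ ℂ} {f g : ℂ → ℂ}

lemma comp_const_mul {α : ℂ} (hf : IsElliptic L f) (hα : ∀ l ∈ L, α * l ∈ L) :
    IsElliptic L (fun z ↦ f (α * z)) where
  meromorphic z := (hf.meromorphic (α * z)).comp_analyticAt (g := (α * ·)) (by fun_prop)
  periodic l hl z := by simp only [mul_add, hf.periodic _ (hα l hl) _]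

protected lemma mul (hf : IsElliptic L f) (hg : IsElliptic L g) : IsElliptic L (f * g) where
  meromorphic := hf.meromorphic.mul hg.meromorphic
  periodic l hl := (hf.periodic l hl).mul (hg.periodic l hl)

protected lemma pow (hf : IsElliptic L f) (n : ℕ) : IsElliptic L (f ^ n) where
  meromorphic := hf.meromorphic.pow
  periodic l hl z := by simp only [Pi.pow_apply, hf.periodic l hl z]

lemma sum_const_mul {ι : Type*} [Fintype ι] {φ : ι → ℂ → ℂ} (hφ : ∀ i, IsElliptic L (φ i))
    (c : ι → ℂ) : IsElliptic L (fun z ↦ ∑ i, c i * φ i z) where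
  meromorphic z := meromorphicAt_sum_mul (fun i ↦ (hφ i).meromorphic z) c
  periodic l hl z := by simp only [(hφ _).periodic l hl z]

lemma meromorphicOrderAt_eq_of_sub_mem (hf : IsElliptic L f) {z w : ℂ} (h : z - w ∈ L) :
    meromorphicOrderAt f z = meromorphicOrderAt f w := by
  have hcomp : f ∘ (· + (z - w)) = f := funext (hf.periodic _ h)
  rw [← add_sub_cancel w z, ← meromorphicOrderAt_comp_add_const_eq_meromorphicOrderAt, hcomp]

variable [DiscreteTopology L] [IsZLattice ℝ L]

theorem exists_forall_eventuallyEq_const (hf : IsElliptic L f)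
    (hord : ∀ z, 0 ≤ meromorphicOrderAt f z) : ∃ c : ℂ, ∀ z, f =ᶠ[𝓝[≠] z] fun _ ↦ c := by
  let F : ℂ → ℂ := toMeromorphicNFOn f Set.univ
  have hFf (z : ℂ) : F =ᶠ[𝓝[≠] z] f :=
    hf.meromorphic.meromorphicOn.toMeromorphicNFOn_eq_self_on_nhdsNE (Set.mem_univ z)
  have hF : Differentiable ℂ F := fun z ↦ by
    have hNF := meromorphicNFOn_toMeromorphicNFOn f Set.univ (Set.mem_univ z)
    refine (hNF.meromorphicOrderAt_nonneg_iff_analyticAt.1 ?_).differentiableAt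
    exact (hord z).trans_eq (meromorphicOrderAt_congr (hFf z)).symm
  have hFper (z l : ℂ) (hl : l ∈ L) : F (z + l) = F z := by
    have hshift : (fun w ↦ F (w + l)) =ᶠ[𝓝[≠] z] F := by
      have htrans : Tendsto (· + l) (𝓝[≠] z) (𝓝[≠] (z + l)) := map_add_right_nhdsNE.le
      filter_upwards [htrans.eventually (hFf (z + l)), hFf z] with w hwl hw
      rw [hwl, hw, hf.periodic l hl]
    have hcont : Continuous fun w ↦ F (w + l) := hF.continuous.comp (continuous_add_const l)
    exact ((hcont.continuousAt.eventuallyEq_nhds_iff_eventuallyEq_nhdsNE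
      hF.continuous.continuousAt).1 hshift).eq_of_nhds
  have hbdd := (IsZLattice.isCompact_range_of_periodic L F hF.continuous hFper).isBounded
  refine ⟨F 0, fun z ↦ ?_⟩
  filter_upwards [hFf z] with w hw
  rw [← hw, hF.apply_eq_apply_of_bounded hbdd w 0]

lemma eventuallyEq_zero_of_meromorphicOrderAt_pos (hf : IsElliptic L f)
    (hord : ∀ z, 0 ≤ meromorphicOrderAt f z) {s : ℂ} (hs : 0 < meromorphicOrderAt f s) (z : ℂ) :
    f =ᶠ[𝓝[≠] z] 0 := by
  obtain ⟨c, hc⟩ := hf.exists_forall_eventuallyEq_const hord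
  obtain rfl : c = 0 := by
    by_contra hc0
    rw [meromorphicOrderAt_congr (hc s), meromorphicOrderAt_const, if_neg hc0] at hs
    exact hs.false
  exact hc z

lemma exists_finset_forall_pole (hf : IsElliptic L f) :
    ∃ S : Finset ℂ, ∀ z, meromorphicOrderAt f z < 0 → ∃ s ∈ S, z - s ∈ L := by
  have := ZLattice.module_free ℝ L
  let b := (Module.Free.chooseBasis ℤ L).ofZLatticeBasis ℝ L
  let K := Metric.closedBall (0 : ℂ) (∑ i, ‖b i‖)
  let D := MeromorphicOn.divisor f K
  refine ⟨(D.finiteSupport (isCompact_closedBall _ _)).toFinset, fun z hz ↦ ?_⟩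
  have hsub : z - ZSpan.fract b z ∈ L := by
    rw [ZSpan.fract_apply, sub_sub_cancel]
    exact (Module.Basis.ofZLatticeBasis_span ℝ L _).le (ZSpan.floor b z).2
  rw [hf.meromorphicOrderAt_eq_of_sub_mem hsub] at hz
  refine ⟨ZSpan.fract b z, ?_, hsub⟩
  have hK : ZSpan.fract b z ∈ K := mem_closedBall_zero_iff.2 (ZSpan.norm_fract_le b z)
  rw [Set.Finite.mem_toFinset, Function.mem_support,
    MeromorphicOn.divisor_apply hf.meromorphic.meromorphicOn hK, ne_eq, WithTop.untop₀_eq_zero]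
  exact not_or.2 ⟨hz.ne, hz.ne_top⟩

lemma exists_forall_add_meromorphicOrderAt_nonneg (hf : IsElliptic L f) :
    ∃ m : ℕ, ∀ z, 0 ≤ m + meromorphicOrderAt f z := by
  obtain ⟨S, hS⟩ := hf.exists_finset_forall_pole
  choose m hm using fun s ↦ exists_nat_add_nonneg (meromorphicOrderAt f s)
  refine ⟨S.sup m, fun z ↦ ?_⟩
  by_cases hz : 0 ≤ meromorphicOrderAt f z
  · positivity
  · obtain ⟨s, hsS, hs⟩ := hS z (not_le.1 hz)
    rw [hf.meromorphicOrderAt_eq_of_sub_mem hs]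
    refine (hm s).trans ?_
    gcongr
    exact Finset.le_sup hsS

theorem exists_ne_zero_eventually_sum_eq_zero {ι : Type*} [Fintype ι] {φ : ι → ℂ → ℂ}
    (hφ : ∀ i, IsElliptic L (φ i)) {S : Finset ℂ} (hS : S.Nonempty) {m : ℕ}
    (hpole : ∀ i z, meromorphicOrderAt (φ i) z < 0 → ∃ s ∈ S, z - s ∈ L)
    (hm : ∀ i z, 0 ≤ m + meromorphicOrderAt (φ i) z)
    (hcard : S.card * (m + 1) < Fintype.card ι) :
    ∃ c : ι → ℂ, c ≠ 0 ∧ ∀ z, (fun w ↦ ∑ i, c i * φ i w) =ᶠ[𝓝[≠] z] 0 := by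
  obtain ⟨c, hc, hpos⟩ := exists_ne_zero_forall_meromorphicOrderAt_pos
    (fun i s _ ↦ (hφ i).meromorphic s) (fun i s _ ↦ hm i s) hcard
  have hsum := sum_const_mul hφ c
  obtain ⟨s₀, hs₀⟩ := hS
  refine ⟨c, hc, hsum.eventuallyEq_zero_of_meromorphicOrderAt_pos (fun z ↦ ?_) (hpos s₀ hs₀)⟩
  by_cases hz : ∃ s ∈ S, z - s ∈ L
  · obtain ⟨s, hsS, hs⟩ := hz
    exact (hpos s hsS).le.trans_eq (hsum.meromorphicOrderAt_eq_of_sub_mem hs).symm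
  · exact meromorphicOrderAt_sum_mul_nonneg (fun i ↦ (hφ i).meromorphic z)
      (fun i ↦ not_lt.1 fun hi ↦ hz (hpole i z hi)) c

lemma exists_finset_forall_pole_or_pole (hf : IsElliptic L f) (hg : IsElliptic L g) :
    ∃ S : Finset ℂ, S.Nonempty ∧ ∀ z,
      meromorphicOrderAt f z < 0 ∨ meromorphicOrderAt g z < 0 → ∃ s ∈ S, z - s ∈ L := by
  classical
  obtain ⟨S, hS⟩ := hf.exists_finset_forall_pole
  obtain ⟨T, hT⟩ := hg.exists_finset_forall_pole
  refine ⟨insert 0 (S ∪ T), Finset.insert_nonempty _ _, ?_⟩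
  rintro z (hz | hz)
  · obtain ⟨s, hs, hzs⟩ := hS z hz
    exact ⟨s, by simp [hs], hzs⟩
  · obtain ⟨s, hs, hzs⟩ := hT z hz
    exact ⟨s, by simp [hs], hzs⟩

lemma exists_forall_add_meromorphicOrderAt_nonneg_and_nonneg (hf : IsElliptic L f)
    (hg : IsElliptic L g) :
    ∃ m : ℕ, ∀ z, 0 ≤ m + meromorphicOrderAt f z ∧ 0 ≤ m + meromorphicOrderAt g z := by
  obtain ⟨m, hm⟩ := hf.exists_forall_add_meromorphicOrderAt_nonneg
  obtain ⟨n, hn⟩ := hg.exists_forall_add_meromorphicOrderAt_nonneg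
  refine ⟨max m n, fun z ↦ ⟨(hm z).trans ?_, (hn z).trans ?_⟩⟩
  · gcongr
    exact le_max_left m n
  · gcongr
    exact le_max_right m n

lemma exists_ne_zero_eventually_sum_monomials_eq_zero (hf : IsElliptic L f)
    (hg : IsElliptic L g) :
    ∃ (N : ℕ) (c : Fin N × Fin N → ℂ), c ≠ 0 ∧
      ∀ z, (fun w ↦ ∑ p, c p * (f w ^ (p.1 : ℕ) * g w ^ (p.2 : ℕ))) =ᶠ[𝓝[≠] z] 0 := by
  obtain ⟨S, hS, hpole⟩ := hf.exists_finset_forall_pole_or_pole hg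
  obtain ⟨m, hm⟩ := hf.exists_forall_add_meromorphicOrderAt_nonneg_and_nonneg hg
  let N := S.card * (2 * m + 1) + 1
  have hcard : S.card * (2 * N * m + 1) < Fintype.card (Fin N × Fin N) := by
    rw [Fintype.card_prod, Fintype.card_fin]
    have hN : N = S.card * (2 * m + 1) + 1 := rfl
    nlinarith
  refine ⟨N, exists_ne_zero_eventually_sum_eq_zero
    (φ := fun p : Fin N × Fin N ↦ f ^ (p.1 : ℕ) * g ^ (p.2 : ℕ))
    (fun p ↦ (hf.pow p.1).mul (hg.pow p.2)) hS (fun p z hz ↦ hpole z ?_) (fun p z ↦ ?_) hcard⟩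
  · contrapose! hz
    simpa using add_meromorphicOrderAt_pow_mul_pow_nonneg (m := 0) (hf.meromorphic z)
      (hg.meromorphic z) (by simpa using hz.1) (by simpa using hz.2) p.1 p.2
  · refine (add_meromorphicOrderAt_pow_mul_pow_nonneg (hf.meromorphic z) (hg.meromorphic z)
      (hm z).1 (hm z).2 p.1 p.2).trans ?_
    gcongr
    omega

theorem exists_ne_zero_evalEval_eq_zero (hf : IsElliptic L f) (hg : IsElliptic L g) :
    ∃ P : ℂ[X][X], P ≠ 0 ∧
      ∀ z, ContinuousAt f z → ContinuousAt g z → P.evalEval (f z) (g z) = 0 := by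
  obtain ⟨N, c, hc, hsum⟩ := hf.exists_ne_zero_eventually_sum_monomials_eq_zero hg
  obtain ⟨P, hP, hPeval⟩ := exists_ne_zero_evalEval_eq_sum hc
  refine ⟨P, hP, fun z hfz hgz ↦ ?_⟩
  have hcont : ContinuousAt (fun w ↦ ∑ p, c p * (f w ^ (p.1 : ℕ) * g w ^ (p.2 : ℕ))) z := by
    fun_prop
  rw [hPeval]
  exact ((hcont.eventuallyEq_nhds_iff_eventuallyEq_nhdsNE continuousAt_const).1
    (hsum z)).eq_of_nhds

end IsElliptic

lemma den_mul_mul_mem_latticeSet {ω₁ ω₂ l : ℂ} (r : ℚ) (hl : l ∈ latticeSet ω₁ ω₂) :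
    ((r.den : ℤ) : ℂ) * r * l ∈ latticeSet ω₁ ω₂ := by
  obtain ⟨a, b, rfl⟩ := hl
  have hnum : ((r.den : ℤ) : ℂ) * r = r.num := mod_cast r.den_mul_eq_num
  exact ⟨r.num * a, r.num * b, by rw [hnum]; push_cast; ring⟩

section WeierstrassP

variable (L : PeriodPair)

lemma mem_latticeSet_iff {z : ℂ} : z ∈ latticeSet L.ω₁ L.ω₂ ↔ z ∈ L.lattice := by
  simp only [latticeSet, Set.mem_ofPred_eq, PeriodPair.mem_lattice, eq_comm]

lemma wp_eq_weierstrassP (z : ℂ) : wp L.ω₁ L.ω₂ z = L.weierstrassP z := by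
  -- `wp` sums `(z + l)⁻²` and `weierstrassP` sums `(z - l)⁻²`, hence the negation.
  let e : ℤ × ℤ ≃ L.lattice := L.latticeEquivProd.symm.toEquiv.trans (Equiv.neg _)
  have he (p : ℤ × ℤ) : (e p : ℂ) = -latPt L.ω₁ L.ω₂ p :=
    congrArg Neg.neg (L.latticeEquiv_symm_apply p)
  have he0 (p : ℤ × ℤ) : -latPt L.ω₁ L.ω₂ p = 0 ↔ p = 0 := by simp [← he, e]
  rw [← L.weierstrassPExcept_add 0 z, wp, PeriodPair.weierstrassPExcept, ← e.tsum_eq, add_comm]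
  congr 1
  · refine tsum_congr fun p ↦ ?_
    simp only [ZeroMemClass.coe_zero, he, he0, sub_neg_eq_add, neg_sq, one_div]
  · simp

lemma isElliptic_weierstrassP : IsElliptic L.lattice L.weierstrassP where
  meromorphic := L.meromorphic_weierstrassP
  periodic l hl z := L.weierstrassP_add_coe z ⟨l, hl⟩

lemma exists_ne_zero_evalEval_weierstrassP_eq_zero {n : ℤ} (hn : n ≠ 0) {α : ℂ}
    (hα : ∀ l ∈ L.lattice, n * α * l ∈ L.lattice) :
    ∃ P : ℂ[X][X], P ≠ 0 ∧ ∀ ω, ω ∉ L.lattice → α * ω ∉ L.lattice →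
      P.evalEval (L.weierstrassP ω) (L.weierstrassP (α * ω)) = 0 := by
  have hn' : (n : ℂ) ≠ 0 := Int.cast_ne_zero.2 hn
  have hn_mem (l : ℂ) (hl : l ∈ L.lattice) : n * l ∈ L.lattice := by
    simpa using L.lattice.smul_mem n hl
  have hcont {β z : ℂ} (hz : β * z ∉ L.lattice) :
      ContinuousAt (fun w ↦ L.weierstrassP (β * w)) z :=
    (L.analyticOnNhd_weierstrassP _ hz).continuousAt.comp' (continuous_const_mul β).continuousAt
  obtain ⟨P, hP, hrel⟩ := ((isElliptic_weierstrassP L).comp_const_mul hn_mem)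
    |>.exists_ne_zero_evalEval_eq_zero ((isElliptic_weierstrassP L).comp_const_mul hα)
  refine ⟨P, hP, fun ω hω hαω ↦ ?_⟩
  have h₁ : n * (ω / n) = ω := mul_div_cancel₀ ω hn'
  have h₂ : n * α * (ω / n) = α * ω := by field_simp
  simpa only [h₁, h₂] using hrel (ω / n) (hcont (by rwa [h₁])) (hcont (by rwa [h₂]))

end WeierstrassP

theorem statement9_general (ω₁ ω₂ : ℂ) (h : LinearIndependent ℝ ![ω₁, ω₂]) (α : ℂ)
    (n : ℤ) (hn : n ≠ 0) (hα : ∀ l ∈ latticeSet ω₁ ω₂, n * α * l ∈ latticeSet ω₁ ω₂) :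
    ∃ m : ℕ, 1 ≤ m ∧ ∃ p q : Fin m → Polynomial ℂ, (∀ i, q i ≠ 0) ∧
      ∀ ω : ℂ, ω ∉ latticeSet ω₁ ω₂ → α * ω ∉ latticeSet ω₁ ω₂ →
        (∀ i, (q i).eval (wp ω₁ ω₂ ω) ≠ 0) →
        wp ω₁ ω₂ (α * ω) ^ m +
          ∑ i : Fin m,
            ((p i).eval (wp ω₁ ω₂ ω) / (q i).eval (wp ω₁ ω₂ ω)) *
              wp ω₁ ω₂ (α * ω) ^ (i : ℕ) = 0 := by
  let L : PeriodPair := ⟨ω₁, ω₂, h⟩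
  obtain ⟨P, hP, hrel⟩ := exists_ne_zero_evalEval_weierstrassP_eq_zero L hn (α := α)
    (by simpa only [← mem_latticeSet_iff L] using hα)
  obtain ⟨m, hm, p, q, hq, hpq⟩ := exists_monic_relation hP
  refine ⟨m, hm, p, q, hq, fun ω hω hαω ↦ hpq _ _ ?_⟩
  rw [wp_eq_weierstrassP L, wp_eq_weierstrassP L]
  exact hrel ω (mt (mem_latticeSet_iff L).2 hω) (mt (mem_latticeSet_iff L).2 hαω)

/-- For a lattice `Λ` and a nonzero rational `λ`, the function
`ω ↦ ℘(λω)` is algebraic over `ℂ(℘)`: there are `m ≥ 1` and rational functions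
`cᵢ = pᵢ/qᵢ ∈ ℂ(U)` with `℘(λω)^m + ∑_{i<m} cᵢ(℘(ω)) ℘(λω)^i = 0` whenever `ω, λω ∉ Λ`
and all denominators are nonzero. -/
theorem statement9 (ω₁ ω₂ : ℂ) (h : LinearIndependent ℝ ![ω₁, ω₂]) (lam : ℚ)
    (hlam : lam ≠ 0) :
    ∃ m : ℕ, 1 ≤ m ∧ ∃ p q : Fin m → Polynomial ℂ, (∀ i, q i ≠ 0) ∧
      ∀ ω : ℂ, ω ∉ latticeSet ω₁ ω₂ → (lam : ℂ) * ω ∉ latticeSet ω₁ ω₂ →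
        (∀ i, (q i).eval (wp ω₁ ω₂ ω) ≠ 0) →
        wp ω₁ ω₂ ((lam : ℂ) * ω) ^ m +
          ∑ i : Fin m,
            ((p i).eval (wp ω₁ ω₂ ω) / (q i).eval (wp ω₁ ω₂ ω)) *
              wp ω₁ ω₂ ((lam : ℂ) * ω) ^ (i : ℕ) = 0 := by
  exact statement9_general ω₁ ω₂ h lam lam.den (mod_cast lam.den_nz) fun _ ↦
    den_mul_mul_mem_latticeSet lam

end WeierstrassElliptic
end

section
/- Let (k,d) be a differential field of characteristic zero and let (R,d) be a differential ring extension of (k,d) containing an algebraic closure kbar of k that is closed under the derivation d. If f in R satisfies a non-trivial linear d-differential equation with coefficients in kbar, then f satisfies a non-trivial linear d-differential equation with coefficients in k. -/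
open scoped BigOperators

/-!
Let `F` be the subfield generated over `K` by the coefficients of the given equation; it is finite
over `K`. The derivation of `R` induces a `K`-linear derivation `F → R / F`, which vanishes because
`F / K` is separable, so `F` is closed under `d`. Differentiating the equation repeatedly therefore
keeps every derivative of `f` in the `F`-span of the first few. This span is finite-dimensional over
`F`, hence over `K`, and so the derivatives of `f` are linearly dependent over `K`.
-/

section LinearAlgebra

theorem exists_mem_span_image_Iio_of_not_linearIndependent {k M ι : Type*} [DivisionRing k]
    [AddCommGroup M] [Module k M] [LinearOrder ι] {v : ι → M} (hv : ¬LinearIndependent k v) :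
    ∃ n, v n ∈ Submodule.span k (v '' Set.Iio n) := by
  obtain ⟨l, hl, hl0⟩ := not_linearIndependent_iff_finsupp.mp hv
  have hne : l.support.Nonempty := Finsupp.support_nonempty_iff.mpr hl0
  set n := l.support.max' hne
  have hn : n ∈ l.support := l.support.max'_mem hne
  have leading_term : l n • v n = -∑ i ∈ l.support.erase n, l i • v i :=
    eq_neg_of_add_eq_zero_left ((Finset.add_sum_erase _ _ hn).trans hl)
  refine ⟨n, (Submodule.smul_mem_iff _ (Finsupp.mem_support_iff.mp hn)).mp ?_⟩
  rw [leading_term]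
  exact Submodule.neg_mem _ <| Submodule.sum_mem _ fun i hi ↦ Submodule.smul_mem _ _ <|
    Submodule.subset_span ⟨i, Finset.lt_max'_of_mem_erase_max' _ hne hi, rfl⟩

theorem exists_fin_relation_iff_not_linearIndependent {k M : Type*} [Ring k] [AddCommGroup M]
    [Module k M] {v : ℕ → M} :
    (∃ (m : ℕ) (a : Fin (m + 1) → k), (∃ i, a i ≠ 0) ∧ ∑ i, a i • v i = 0) ↔
      ¬LinearIndependent k v := by
  constructor
  · rintro ⟨m, a, ha, hsum⟩ hv
    exact Fintype.not_linearIndependent_iff.mpr ⟨a, hsum, ha⟩ (hv.comp _ Fin.val_injective)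
  · intro hv
    obtain ⟨l, hl, hl0⟩ := not_linearIndependent_iff_finsupp.mp hv
    obtain ⟨j, hj⟩ := Finsupp.ne_iff.mp hl0
    have support_subset : l.support ⊆ Finset.range (l.support.sup id + 1) :=
      Finset.subset_range_sup_succ _
    refine ⟨l.support.sup id, fun i ↦ l i, ⟨⟨j, ?_⟩, hj⟩, ?_⟩
    · exact Finset.mem_range.mp (support_subset (Finsupp.mem_support_iff.mpr hj))
    · rw [Fin.sum_univ_eq_sum_range (fun i ↦ l i • v i), ← hl]
      exact (l.sum_of_support_subset support_subset (fun i c ↦ c • v i)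
        fun i _ ↦ zero_smul k (v i)).symm

theorem not_linearIndependent_of_forall_mem_of_finite {k M ι : Type*} [DivisionRing k]
    [AddCommGroup M] [Module k M] [Infinite ι] {v : ι → M} (W : Submodule k M)
    [Module.Finite k W] (hv : ∀ i, v i ∈ W) : ¬LinearIndependent k v := fun h ↦
  have : LinearIndependent k fun i ↦ (⟨v i, hv i⟩ : W) := .of_comp W.subtype h
  not_finite_iff_infinite.mpr ‹_› this.finite_of_isNoetherian

theorem exists_finiteDimensional_not_linearIndependent {K L M ι : Type*} [Field K] [Field L]
    [Algebra K L] [Algebra.IsAlgebraic K L] [AddCommGroup M] [Module L M] {v : ι → M}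
    (hv : ¬LinearIndependent L v) :
    ∃ F : IntermediateField K L, FiniteDimensional K F ∧ ¬LinearIndependent F v := by
  obtain ⟨l, hl, hl0⟩ := not_linearIndependent_iff_finsupp.mp hv
  obtain ⟨j, hj⟩ := Finsupp.ne_iff.mp hl0
  let F : IntermediateField K L := .adjoin K (Set.range l)
  have coeff_mem (i : ι) : l i ∈ F := IntermediateField.subset_adjoin K _ ⟨i, rfl⟩
  have : Finite (Set.range l) := l.finite_range
  refine ⟨F, IntermediateField.finiteDimensional_adjoin fun x _ ↦ Algebra.IsIntegral.isIntegral x,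
    not_linearIndependent_iff.mpr ⟨l.support, fun i ↦ ⟨l i, coeff_mem i⟩, hl, j, ?_, ?_⟩⟩
  · exact Finsupp.mem_support_iff.mpr hj
  · exact Subtype.coe_ne_coe.mp hj

end LinearAlgebra

section Unramified

variable {k E R : Type*} [CommRing k] [CommRing E] [CommRing R] [Algebra k E] [Algebra E R]
  [Algebra k R] [IsScalarTower k E R]

/-- The `k`-derivation `E → R / E` induced by a derivation `D` of `R` that maps `k` into `E`. It
measures the failure of `E` to be closed under `D`; here `E` stands for its image in `R`. -/
def derivationToQuotient (D : Derivation ℤ R R)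
    (hD : ∀ c : k, D (algebraMap k R c) ∈ LinearMap.range (Algebra.linearMap E R)) :
    Derivation k E (R ⧸ LinearMap.range (Algebra.linearMap E R)) :=
  Derivation.mk'
    { toFun x := Submodule.Quotient.mk (D (algebraMap E R x))
      map_add' x y := by simp only [map_add, Submodule.Quotient.mk_add]
      map_smul' c x := by
        have correction_mem : x • D (algebraMap k R c) ∈ LinearMap.range (Algebra.linearMap E R) :=
          Submodule.smul_mem _ x (hD c)
        rw [RingHom.id_apply, ← Submodule.Quotient.mk_smul, Submodule.Quotient.eq]
        convert correction_mem using 1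
        simp only [Algebra.smul_def, map_mul, ← IsScalarTower.algebraMap_apply, D.leibniz]
        ring }
    fun x y ↦ by
      simp [Algebra.smul_def, ← Submodule.Quotient.mk_smul]

theorem derivation_mem_range_of_formallyUnramified [Algebra.FormallyUnramified k E]
    (D : Derivation ℤ R R)
    (hD : ∀ c : k, D (algebraMap k R c) ∈ LinearMap.range (Algebra.linearMap E R)) (x : E) :
    D (algebraMap E R x) ∈ LinearMap.range (Algebra.linearMap E R) := by
  have : Subsingleton (Derivation k E (R ⧸ LinearMap.range (Algebra.linearMap E R))) :=
    (KaehlerDifferential.linearMapEquivDerivation k E).symm.subsingleton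
  have quotient_eq_zero : derivationToQuotient D hD x = 0 := by
    rw [Subsingleton.elim (derivationToQuotient D hD) 0, Derivation.zero_apply]
  exact (Submodule.Quotient.mk_eq_zero _).mp quotient_eq_zero

end Unramified

section IteratedDerivatives

variable {E R : Type*} [CommRing R]

theorem derivation_mem_of_mem_span [CommRing E] [Algebra E R] {D : Derivation ℤ R R}
    (hD : ∀ c : E, D (algebraMap E R c) ∈ LinearMap.range (Algebra.linearMap E R))
    {s : Set R} {W : Submodule E R} (hs : s ⊆ W) (hDs : ∀ x ∈ s, D x ∈ W) {x : R}
    (hx : x ∈ Submodule.span E s) : D x ∈ W := by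
  induction hx using Submodule.span_induction with
  | mem x hx => exact hDs x hx
  | zero => rw [map_zero]; exact W.zero_mem
  | add x y _ _ hx hy => rw [map_add]; exact W.add_mem hx hy
  | smul c x hx hDx =>
    obtain ⟨c', hc'⟩ := hD c
    have leibniz_smul : D (c • x) = c • D x + c' • x := by
      rw [Algebra.smul_def, D.leibniz, ← hc', Algebra.linearMap_apply, smul_eq_mul, smul_eq_mul,
        mul_comm x, ← Algebra.smul_def, ← Algebra.smul_def]
    rw [leibniz_smul]
    exact W.add_mem (W.smul_mem c hDx) (W.smul_mem c' (Submodule.span_le.mpr hs hx))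

theorem iterate_derivation_mem_span [CommRing E] [Algebra E R] {D : Derivation ℤ R R}
    (hD : ∀ c : E, D (algebraMap E R c) ∈ LinearMap.range (Algebra.linearMap E R)) {f : R} {n : ℕ}
    (hn : D^[n] f ∈ Submodule.span E ((D^[·] f) '' Set.Iio n)) (i : ℕ) :
    D^[i] f ∈ Submodule.span E ((D^[·] f) '' Set.Iio n) := by
  have mem_of_le {j : ℕ} (hj : j ≤ n) : D^[j] f ∈ Submodule.span E ((D^[·] f) '' Set.Iio n) := by
    rcases hj.lt_or_eq with hlt | rfl
    · exact Submodule.subset_span ⟨j, hlt, rfl⟩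
    · exact hn
  induction i with
  | zero => exact mem_of_le n.zero_le
  | succ i ih =>
    rw [Function.iterate_succ_apply']
    refine derivation_mem_of_mem_span hD Submodule.subset_span ?_ ih
    rintro _ ⟨j, hj, rfl⟩
    rw [← Function.iterate_succ_apply' D]
    exact mem_of_le hj

theorem not_linearIndependent_iterate_derivation_of_finite {K : Type*} [Field K] [Field E]
    [Algebra K E] [Algebra E R] [Algebra K R] [IsScalarTower K E R] [FiniteDimensional K E]
    {D : Derivation ℤ R R}
    (hD : ∀ c : E, D (algebraMap E R c) ∈ LinearMap.range (Algebra.linearMap E R)) {f : R}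
    (hf : ¬LinearIndependent E (D^[·] f)) : ¬LinearIndependent K (D^[·] f) := by
  obtain ⟨n, hn⟩ := exists_mem_span_image_Iio_of_not_linearIndependent hf
  let W : Submodule E R := Submodule.span E ((D^[·] f) '' Set.Iio n)
  have : Module.Finite E (W.restrictScalars K) := .span_of_finite E ((Set.finite_Iio n).image _)
  have : Module.Finite K (W.restrictScalars K) := .trans E (W.restrictScalars K)
  exact not_linearIndependent_of_forall_mem_of_finite (W.restrictScalars K)
    (iterate_derivation_mem_span hD hn)

end IteratedDerivatives

theorem statement13_general {K L R : Type*} [Field K] [Field L] [CommRing R] [Algebra K L]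
    [Algebra L R] [Algebra K R] [IsScalarTower K L R] [Algebra.IsSeparable K L]
    (D : Derivation ℤ R R) (hD : ∀ c : K, ∃ c' : K, D (algebraMap K R c) = algebraMap K R c')
    (f : R)
    (hf : ∃ (m : ℕ) (a : Fin (m + 1) → L), (∃ i, a i ≠ 0) ∧
        ∑ i : Fin (m + 1), algebraMap L R (a i) * D^[(i : ℕ)] f = 0) :
    ∃ (m : ℕ) (a : Fin (m + 1) → K), (∃ i, a i ≠ 0) ∧
      ∑ i : Fin (m + 1), algebraMap K R (a i) * D^[(i : ℕ)] f = 0 := by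
  simp only [← Algebra.smul_def] at hf ⊢
  obtain ⟨F, _, hF⟩ := exists_finiteDimensional_not_linearIndependent (K := K)
    (exists_fin_relation_iff_not_linearIndependent (v := (D^[·] f)).mp hf)
  have : Algebra.FormallyUnramified K F := .of_isSeparable K F
  have derivation_base_mem (c : K) :
      D (algebraMap K R c) ∈ LinearMap.range (Algebra.linearMap F R) := by
    obtain ⟨c', hc'⟩ := hD c
    exact ⟨algebraMap K F c', by
      rw [hc', Algebra.linearMap_apply, ← IsScalarTower.algebraMap_apply]⟩
  have derivation_mem := derivation_mem_range_of_formallyUnramified (E := F) D derivation_base_mem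
  exact exists_fin_relation_iff_not_linearIndependent.mpr
    (not_linearIndependent_iterate_derivation_of_finite derivation_mem hF)

/-- Let `(K,d)` be a differential field of characteristic zero and
`(R,d)` a differential ring extension of `(K,d)` containing an algebraic closure `L` of
`K` which is closed under the derivation `d`.  If `f ∈ R` satisfies a non-trivial linear
`d`-differential equation with coefficients in `L`, then it satisfies one with
coefficients in `K`. -/
theorem statement13 (K L R : Type*) [Field K] [CharZero K] [Field L] [CommRing R]
    [Algebra K L] [Algebra L R] [Algebra K R] [IsScalarTower K L R]
    [IsAlgClosure K L]
    (d : R → R)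
    (hadd : ∀ a b : R, d (a + b) = d a + d b)
    (hleib : ∀ a b : R, d (a * b) = a * d b + d a * b)
    (hresK : ∀ c : K, ∃ c' : K, d (algebraMap K R c) = algebraMap K R c')
    (hresL : ∀ c : L, ∃ c' : L, d (algebraMap L R c) = algebraMap L R c')
    (f : R)
    (hf : ∃ (m : ℕ) (a : Fin (m + 1) → L), (∃ i, a i ≠ 0) ∧
        ∑ i : Fin (m + 1), algebraMap L R (a i) * d^[(i : ℕ)] f = 0) :
    ∃ (m : ℕ) (a : Fin (m + 1) → K), (∃ i, a i ≠ 0) ∧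
      ∑ i : Fin (m + 1), algebraMap K R (a i) * d^[(i : ℕ)] f = 0 := by
  have : Algebra.IsAlgebraic K L := IsAlgClosure.isAlgebraic
  exact statement13_general (.mk' (AddMonoidHom.mk' d hadd).toIntLinearMap fun a b ↦
    (hleib a b).trans (by rw [mul_comm (d a)]; rfl)) hresK f hf
end
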